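/- Let C be a braided monoidal category in which coequalizers are preserved by the monoidal product. Let (t₁,t₂,t₃,t₄,e₁,e₂,j) and (t₁,t₂,t₃,t₄,e₁′,e₂′,j′) be regular weak multiplier bimonoids on the same object A such that the induced multiplications m := (j⊗1)∘t₁ and m′ := (j′⊗1)∘t₁ are equal, are regular epimorphisms, and are non-degenerate with respect to some class of objects containing I, A and A⊗A. Then the following are equivalent: (i) e₁ = e₁′; (ii) e₂ = e₂′; (iii) g = g′ (the morphisms of Lemma 5.1 for the two structures); (iv) j = j′. Moreover, these equivalent conditions hold if in addition idempotent morphisms in C split and the morphisms d̂₁ (or d̂₂) of both structures are epimorphisms. -/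

import Mathlib

open CategoryTheory Category MonoidalCategory Limits

universe v u

namespace WeakMultiplierBimonoid

variable {C : Type u} [Category.{v} C] [MonoidalCategory C] [BraidedCategory C]

def wl {A : C} (f : A ⊗ A ⟶ A ⊗ A) : A ⊗ (A ⊗ A) ⟶ A ⊗ (A ⊗ A) :=
  (α_ A A A).inv ≫ (f ▷ A) ≫ (α_ A A A).hom

def ml {A : C} (f : A ⊗ A ⟶ A) : A ⊗ (A ⊗ A) ⟶ A ⊗ A :=
  (α_ A A A).inv ≫ (f ▷ A)

def NdLeftOn {Z V W : C} (v : Z ⊗ V ⟶ W) (𝒴 : Set C) : Prop :=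
  ∀ (X : C), ∀ Y ∈ 𝒴, Function.Injective
    (fun g : X ⟶ V ⊗ Y => (Z ◁ g) ≫ (α_ Z V Y).inv ≫ (v ▷ Y))

def NdRightOn {Z V W : C} (v : Z ⊗ V ⟶ W) (𝒴 : Set C) : Prop :=
  NdLeftOn ((β_ V Z).hom ≫ v) 𝒴

/-- The "middle braiding" `1 ⊗ c ⊗ 1 : A⁴ ⟶ A⁴` on `(A ⊗ A) ⊗ (A ⊗ A)`. -/
def midSw (A : C) : (A ⊗ A) ⊗ (A ⊗ A) ⟶ (A ⊗ A) ⊗ (A ⊗ A) :=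
  (α_ A A (A ⊗ A)).hom ≫ (A ◁ (α_ A A A).inv) ≫ (A ◁ ((β_ A A).hom ▷ A)) ≫
    (A ◁ (α_ A A A).hom) ≫ (α_ A A (A ⊗ A)).inv

/-- A regular weak multiplier bimonoid on an object `A` of a braided monoidal category,
with multiplication non-degenerate with respect to the class `𝒴`
(Definition 2.9 of the paper). -/
structure RWMB (A : C) (𝒴 : Set C) where
  t₁ : A ⊗ A ⟶ A ⊗ A
  t₂ : A ⊗ A ⟶ A ⊗ A
  t₃ : A ⊗ A ⟶ A ⊗ A
  t₄ : A ⊗ A ⟶ A ⊗ A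
  e₁ : A ⊗ A ⟶ A ⊗ A
  e₂ : A ⊗ A ⟶ A ⊗ A
  j : A ⟶ 𝟙_ C
  /-- the induced multiplication -/
  m : A ⊗ A ⟶ A
  /-- counit condition (m1); in particular `m` is the induced multiplication -/
  hm₁ : m = t₁ ≫ (j ▷ A) ≫ (λ_ A).hom
  /-- counit condition (m2) -/
  hm₂ : m = t₂ ≫ (A ◁ j) ≫ (ρ_ A).hom
  /-- counit condition (m3) -/
  hm₃ : m = (β_ A A).hom ≫ t₃ ≫ (j ▷ A) ≫ (λ_ A).hom
  /-- counit condition (m4) -/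
  hm₄ : m = (β_ A A).hom ≫ t₄ ≫ (A ◁ j) ≫ (ρ_ A).hom
  /-- the class `𝒴` contains the monoidal unit -/
  memI : (𝟙_ C) ∈ 𝒴
  memA : A ∈ 𝒴
  memAA : (A ⊗ A) ∈ 𝒴
  /-- `m` is non-degenerate on the left with respect to `𝒴` -/
  ndl : NdLeftOn m 𝒴
  /-- `m` is non-degenerate on the right with respect to `𝒴` -/
  ndr : NdRightOn m 𝒴
  /-- relation (c12) -/
  hc12 : (A ◁ t₁) ≫ ml m = wl t₂ ≫ (A ◁ m)
  /-- relation (c13) -/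
  hc13 : wl t₁ ≫ (A ◁ (β_ A A).hom) ≫ (A ◁ m)
    = (A ◁ (β_ A A).hom) ≫ wl t₃ ≫ (A ◁ m)
  /-- relation (c14) -/
  hc14 : (A ◁ t₁) ≫ wl (β_ A A).hom ≫ ml m = wl t₄ ≫ (A ◁ m)
  /-- relation (c23) -/
  hc23 : wl t₂ ≫ (A ◁ (β_ A A).hom) ≫ (A ◁ m) = (A ◁ t₃) ≫ ml m
  /-- relation (c24) -/
  hc24 : (A ◁ t₂) ≫ wl (β_ A A).hom ≫ ml m = wl (β_ A A).hom ≫ (A ◁ t₄) ≫ ml m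
  /-- relation (c34) -/
  hc34 : (A ◁ t₃) ≫ wl (β_ A A).hom ≫ ml m = wl t₄ ≫ (A ◁ (β_ A A).hom) ≫ (A ◁ m)
  /-- interchange relation for `(t₂, t₁)` -/
  hi21 : (A ◁ t₁) ≫ wl t₂ = wl t₂ ≫ (A ◁ t₁)
  /-- interchange relation for `(t₄, t₁)` -/
  hi41 : (A ◁ t₁) ≫ wl t₄ = wl t₄ ≫ (A ◁ t₁)
  /-- interchange relation for `(t₂, t₃)` -/
  hi23 : (A ◁ t₃) ≫ wl t₂ = wl t₂ ≫ (A ◁ t₃)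
  /-- interchange relation for `(t₄, t₃)` -/
  hi43 : (A ◁ t₃) ≫ wl t₄ = wl t₄ ≫ (A ◁ t₃)
  /-- compatibility of the idempotents `e₁`, `e₂`:
  `(m ⊗ m) ∘ (1 ⊗ c ⊗ 1) ∘ (1 ⊗ 1 ⊗ e₁) = (m ⊗ m) ∘ (1 ⊗ c ⊗ 1) ∘ (e₂ ⊗ 1 ⊗ 1)` -/
  hecomp : ((A ⊗ A) ◁ e₁) ≫ midSw A ≫ (m ▷ (A ⊗ A)) ≫ (A ◁ m)
    = (e₂ ▷ (A ⊗ A)) ≫ midSw A ≫ (m ▷ (A ⊗ A)) ≫ (A ◁ m)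
  /-- Axiom I for the weakly counital fusion morphism `(t₁, e₁, j)` -/
  ax1 : (A ◁ t₁) ≫ wl (β_ A A).hom ≫ (A ◁ t₁) ≫ wl (β_ A A).inv ≫ wl t₁
    = wl t₁ ≫ (A ◁ t₁)
  /-- Axiom II -/
  ax2 : e₁ ≫ e₁ = e₁
  /-- Axiom III -/
  ax3 : t₁ ≫ e₁ = t₁
  /-- Axiom IV -/
  ax4 : (A ◁ e₁) ≫ (A ◁ (β_ A A).inv) ≫ wl t₁ ≫ (A ◁ (β_ A A).hom) ≫ ml m
    = (A ◁ (β_ A A).inv) ≫ wl t₁ ≫ (A ◁ (β_ A A).hom) ≫ ml m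
  /-- Axiom V -/
  ax5 : (A ◁ t₁) ≫ wl e₁ = wl e₁ ≫ (A ◁ t₁)
  /-- Axiom VI -/
  ax6 : wl t₁ ≫ (A ◁ e₁)
    = (A ◁ (β_ A A).inv) ≫ wl e₁ ≫ (A ◁ (β_ A A).hom) ≫ wl t₁
  /-- Axiom VII -/
  ax7 : wl t₁ ≫ (A ◁ ((j ▷ A) ≫ (λ_ A).hom)) ≫ m
    = (A ◁ (β_ A A).hom) ≫ (A ◁ e₁) ≫ (A ◁ ((A ◁ j) ≫ (ρ_ A).hom)) ≫ m
  /-- Axiom VIII -/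
  ax8 : wl t₁ ≫ (A ◁ (β_ A A).hom) ≫ ml m ≫ (j ▷ A) ≫ (λ_ A).hom
    = (A ◁ (β_ A A).hom) ≫ (A ◁ e₁) ≫ (A ◁ ((j ▷ A) ≫ (λ_ A).hom)) ≫ m

namespace RWMB

variable {A : C} {𝒴 : Set C} (S : RWMB A 𝒴)

/-- `⊓ᴸ₁ := (j ⊗ 1) ∘ e₁`. -/
def piL1 : A ⊗ A ⟶ A := S.e₁ ≫ (S.j ▷ A) ≫ (λ_ A).hom

/-- `⊓ᴸ₂ := (j ⊗ 1) ∘ t₄ ∘ c`. -/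
def piL2 : A ⊗ A ⟶ A := (β_ A A).hom ≫ S.t₄ ≫ (S.j ▷ A) ≫ (λ_ A).hom

/-- `⊓̄ᴿ₁ ∘ c⁻¹ = (1 ⊗ j) ∘ e₁`, the second leg of the coequalizer defining the base
object. -/
def piBarR1c : A ⊗ A ⟶ A := S.e₁ ≫ (A ◁ S.j) ≫ (ρ_ A).hom

end RWMB


/-- `⊓̄ᴿ₂ := (1 ⊗ j) ∘ t₁`. -/
def RWMB.piBarR2 {A : C} {𝒴 : Set C} (S : RWMB A 𝒴) : A ⊗ A ⟶ A :=
  S.t₁ ≫ (A ◁ S.j) ≫ (ρ_ A).hom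

/-- `d₁ := (m ⊗ 1) ∘ (1 ⊗ c) ∘ (t₁ ⊗ 1) ∘ (1 ⊗ c⁻¹) : A ⊗ A ⊗ A ⟶ A ⊗ A`. -/
def dOne {A : C} (m : A ⊗ A ⟶ A) (t₁ : A ⊗ A ⟶ A ⊗ A) : A ⊗ (A ⊗ A) ⟶ A ⊗ A :=
  (A ◁ (β_ A A).inv) ≫ wl t₁ ≫ (A ◁ (β_ A A).hom) ≫ ml m


theorem epi_map_of_reg (F : C ⥤ C) [PreservesColimitsOfShape WalkingParallelPair F]
    {X Y : C} (f : X ⟶ Y) (r : RegularEpi f) : Epi (F.map f) := by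
  have h := isColimitCoforkMapOfIsColimit F r.w r.isColimit
  exact Cofork.IsColimit.epi h


set_option linter.unusedSectionVars false

section generic
variable {A : C}

theorem aux_tw0 (f : A ⊗ A ⟶ A ⊗ A) :
    (A ◁ (β_ A A).inv) ≫ wl f ≫ (A ◁ (β_ A A).hom)
      = wl (β_ A A).hom ≫ (A ◁ f) ≫ wl (β_ A A).inv := by
  have h := BraidedCategory.braiding_naturality_left f A
  simp only [BraidedCategory.braiding_tensor_left_hom] at h
  unfold wl
  rw [← cancel_epi (A ◁ (β_ A A).hom), ← cancel_epi (α_ A A A).hom,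
    ← cancel_mono ((α_ A A A).inv ≫ (β_ A A).hom ▷ A ≫ (α_ A A A).hom)]
  simpa using h

theorem aux_tw2 (p : A ⊗ A ⟶ A) :
    (A ◁ (β_ A A).inv) ≫ ml p = wl (β_ A A).hom ≫ (A ◁ p) ≫ (β_ A A).inv := by
  have h := BraidedCategory.braiding_naturality_left p A
  simp only [BraidedCategory.braiding_tensor_left_hom] at h
  unfold wl ml
  rw [← cancel_epi (A ◁ (β_ A A).hom), ← cancel_epi (α_ A A A).hom,
    ← cancel_mono ((β_ A A).hom)]
  simpa using h

/-- `D f`. -/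
def DD (m : A ⊗ A ⟶ A) (f : A ⊗ A ⟶ A ⊗ A) : A ⊗ (A ⊗ A) ⟶ A ⊗ A :=
  wl (β_ A A).hom ≫ (A ◁ f) ≫ ml ((β_ A A).inv ≫ m)

theorem dOne_eq_DD (m : A ⊗ A ⟶ A) (f : A ⊗ A ⟶ A ⊗ A) : dOne m f = DD m f := by
  have h := aux_tw0 f
  unfold dOne DD
  rw [reassoc_of% h]
  simp [wl, ml]

theorem wl_comp (f g : A ⊗ A ⟶ A ⊗ A) : wl (f ≫ g) = wl f ≫ wl g := by simp [wl]

theorem wl_inv_hom_assoc' {Z : C} (h : A ⊗ A ⊗ A ⟶ Z) :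
    wl (β_ A A).inv ≫ wl (β_ A A).hom ≫ h = h := by simp [wl]

instance : IsIso (wl (β_ A A).hom) := by unfold wl; infer_instance

theorem aux_right (m : A ⊗ A ⟶ A) {X Y : C} (h : X ⟶ Y ⊗ A) :
    A ◁ (h ≫ (β_ A Y).inv) ≫ (α_ A A Y).inv ≫ ((β_ A A).hom ≫ m) ▷ Y
      = (β_ A X).hom ≫ h ▷ A ≫ (α_ Y A A).hom ≫ Y ◁ m ≫ (β_ A Y).inv := by
  have h1 := BraidedCategory.braiding_naturality_left m Y
  have h2 := BraidedCategory.braiding_naturality_right A h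
  simp only [BraidedCategory.braiding_tensor_left_hom, BraidedCategory.braiding_tensor_right_hom] at h1 h2
  rw [← reassoc_of% h2, ← cancel_mono (β_ A Y).hom]
  simp [h1]
  have yb := BraidedCategory.yang_baxter A A Y
  simp only [← assoc] at yb
  simp only [assoc] at yb
  rw [reassoc_of% yb]
  simp

theorem aux_right' (m : A ⊗ A ⟶ A) {X Y : C} (h : X ⟶ Y ⊗ A) :
    A ◁ (h ≫ (β_ Y A).hom) ≫ (α_ A A Y).inv ≫ ((β_ A A).inv ≫ m) ▷ Y
      = (β_ X A).inv ≫ h ▷ A ≫ (α_ Y A A).hom ≫ Y ◁ m ≫ (β_ Y A).hom := by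
  have h1 := BraidedCategory.braiding_naturality_right Y m
  have h2 := BraidedCategory.braiding_naturality_left h A
  simp only [BraidedCategory.braiding_tensor_left_hom, BraidedCategory.braiding_tensor_right_hom] at h1 h2
  rw [h1, ← cancel_epi (β_ X A).hom]
  simp only [Iso.hom_inv_id_assoc, MonoidalCategory.whiskerLeft_comp, assoc]
  rw [← reassoc_of% h2]
  simp
  have yb := BraidedCategory.yang_baxter Y A A
  have yb' := congrArg (fun z => z ≫ (α_ A A Y).inv ≫ (β_ A A).inv ▷ Y) yb
  simp only [assoc, Iso.hom_inv_id_assoc, hom_inv_whiskerRight, comp_id] at yb'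
  rw [← reassoc_of% yb']
  simp


theorem aux_e2 (m : A ⊗ A ⟶ A) :
    A ◁ (β_ A A).hom ≫ ml m = wl (β_ A A).inv ≫ A ◁ m ≫ (β_ A A).hom := by
  have h1 := BraidedCategory.braiding_naturality_right A m
  simp only [BraidedCategory.braiding_tensor_right_hom] at h1
  rw [h1]
  simp [wl, ml]

theorem aux_e1 (m : A ⊗ A ⟶ A) :
    wl (β_ A A).hom ≫ A ◁ m = A ◁ (β_ A A).inv ≫ ml m ≫ (β_ A A).hom := by
  have h1 := BraidedCategory.braiding_naturality_left m A
  simp only [BraidedCategory.braiding_tensor_left_hom] at h1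
  unfold ml wl
  simp [h1]

/-- the unit-slot maps -/
def jl (j : A ⟶ 𝟙_ C) (X : C) : A ⊗ X ⟶ X := j ▷ X ≫ (λ_ X).hom

/-- the unit-slot maps -/
def jr (j : A ⟶ 𝟙_ C) (X : C) : X ⊗ A ⟶ X := X ◁ j ≫ (ρ_ X).hom

theorem jl_nat (j : A ⟶ 𝟙_ C) {X Y : C} (f : X ⟶ Y) : A ◁ f ≫ jl j Y = jl j X ≫ f := by
  simp [jl, whisker_exchange_assoc]

theorem jr_nat (j : A ⟶ 𝟙_ C) {X Y : C} (f : X ⟶ Y) : f ▷ A ≫ jr j Y = jr j X ≫ f := by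
  simp [jr, ← whisker_exchange_assoc]

theorem wl_jl (j : A ⟶ 𝟙_ C) (f : A ⊗ A ⟶ A ⊗ A) :
    wl f ≫ jl j (A ⊗ A) = ml (f ≫ jl j A) := by
  simp [wl, ml, jl]

theorem wl_jm (j : A ⟶ 𝟙_ C) (f : A ⊗ A ⟶ A ⊗ A) :
    wl f ≫ A ◁ jl j A = ml (f ≫ jr j A) := by
  simp [wl, ml, jl, jr]

theorem ml_jl (j : A ⟶ 𝟙_ C) (f f' : A ⊗ A ⟶ A) (h : f ≫ j = f' ≫ j) :
    ml f ≫ jl j A = ml f' ≫ jl j A := by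
  simp only [ml, jl, assoc, ← comp_whiskerRight_assoc, h]

theorem ml_jr (j : A ⟶ 𝟙_ C) (f : A ⊗ A ⟶ A) :
    ml f ≫ jr j A = A ◁ (jr j A) ≫ f := by
  rw [ml, assoc, jr_nat]
  simp [jr]

theorem jl_jr (j j' : A ⟶ 𝟙_ C) : jl j A ≫ j' = jr j' A ≫ j := by
  simp only [jl, jr, assoc]
  rw [← leftUnitor_naturality, ← rightUnitor_naturality]
  rw [← whisker_exchange_assoc, unitors_equal]

/-- reassociation -/
def coh (A : C) : (A ⊗ (A ⊗ A)) ⊗ A ≅ A ⊗ (A ⊗ (A ⊗ A)) :=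
  α_ A (A ⊗ A) A ≪≫ whiskerLeftIso A (α_ A A A)

theorem exA {B D E : C} (k : A ⊗ A ⟶ B) (f : E ⟶ D) :
    A ◁ A ◁ f ≫ (α_ A A D).inv ≫ k ▷ D = (α_ A A E).inv ≫ k ▷ E ≫ B ◁ f := by
  rw [associator_inv_naturality_right_assoc, whisker_exchange]

theorem lin1 (f : A ⊗ A ⟶ A ⊗ A) (k m : A ⊗ A ⟶ A) :
    (A ◁ f ≫ ml k) ▷ A ≫ (α_ A A A).hom ≫ A ◁ m
      = (coh A).hom ≫ A ◁ (wl f ≫ A ◁ m) ≫ ml k := by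
  have h := exA k m
  simp only [ml, MonoidalCategory.whiskerLeft_comp, assoc]
  rw [h]
  simp [coh, wl]

theorem lin2 (q k : A ⊗ A ⟶ A) :
    A ◁ ml q ≫ ml k = (coh A).inv ≫ (A ◁ q ≫ k) ▷ A := by
  simp [coh, ml]

/-- action on the first two strands -/
def Wg (f : A ⊗ A ⟶ A ⊗ A) : A ⊗ (A ⊗ (A ⊗ A)) ⟶ A ⊗ (A ⊗ (A ⊗ A)) :=
  (α_ A A (A ⊗ A)).inv ≫ f ▷ (A ⊗ A) ≫ (α_ A A (A ⊗ A)).hom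

theorem Wg_comm (k f : A ⊗ A ⟶ A ⊗ A) : A ◁ A ◁ f ≫ Wg k = Wg k ≫ A ◁ A ◁ f := by
  unfold Wg
  rw [reassoc_of% (exA k f)]
  simp

theorem Wg_coh (f : A ⊗ A ⟶ A ⊗ A) :
    (coh A).inv ≫ (wl f) ▷ A = Wg f ≫ (coh A).inv := by
  simp [coh, wl, Wg]

theorem lin3 (t f : A ⊗ A ⟶ A ⊗ A) :
    (coh A).hom ≫ A ◁ A ◁ t ≫ (coh A).inv ≫ (wl f) ▷ A
      = (wl f) ▷ A ≫ (coh A).hom ≫ A ◁ A ◁ t ≫ (coh A).inv := by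
  have h : (wl f) ▷ A ≫ (coh A).hom = (coh A).hom ≫ Wg f := by
    rw [← Iso.inv_comp_eq, ← assoc, Wg_coh]
    simp
  rw [Wg_coh, reassoc_of% (Wg_comm f t), reassoc_of% h]

theorem asc2 (m : A ⊗ A ⟶ A) (hass : ml m ≫ m = A ◁ m ≫ m) :
    A ◁ ((β_ A A).inv ≫ m) ≫ m = wl (β_ A A).hom ≫ A ◁ m ≫ (β_ A A).inv ≫ m := by
  rw [MonoidalCategory.whiskerLeft_comp, assoc, ← hass, reassoc_of% (aux_tw2 m)]

theorem yb_inv : (α_ A A A).inv ≫ (β_ A A).inv ▷ A ≫ (α_ A A A).hom ≫ A ◁ (β_ A A).inv ≫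
      (α_ A A A).inv ≫ (β_ A A).inv ▷ A ≫ (α_ A A A).hom
    = A ◁ (β_ A A).inv ≫ (α_ A A A).inv ≫ (β_ A A).inv ▷ A ≫ (α_ A A A).hom ≫
      A ◁ (β_ A A).inv := by
  have h := BraidedCategory.yang_baxter_iso A A A
  simpa using congrArg Iso.inv h

theorem nassoc (m : A ⊗ A ⟶ A) (hass : ml m ≫ m = A ◁ m ≫ m) :
    ml ((β_ A A).inv ≫ m) ≫ (β_ A A).inv ≫ m
      = A ◁ ((β_ A A).inv ≫ m) ≫ (β_ A A).inv ≫ m := by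
  have h1 := BraidedCategory.braiding_inv_naturality_right A m
  have h2 := BraidedCategory.braiding_inv_naturality_left m A
  simp only [BraidedCategory.braiding_tensor_right_inv, BraidedCategory.braiding_tensor_left_inv,
    assoc] at h1 h2
  have yb := yb_inv (A := A)
  simp only [ml, comp_whiskerRight, MonoidalCategory.whiskerLeft_comp, assoc] at hass ⊢
  rw [reassoc_of% h1, reassoc_of% h2, hass]
  rw [← reassoc_of% yb]

theorem br1 (n : A ⊗ A ⟶ A) :
    A ◁ ml n ≫ wl (β_ A A).hom = Wg (β_ A A).hom ≫ A ◁ wl (β_ A A).hom ≫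
      (α_ A A (A ⊗ A)).inv ≫ n ▷ (A ⊗ A) := by
  have h1 := BraidedCategory.braiding_naturality_right A n
  simp only [BraidedCategory.braiding_tensor_right_hom] at h1
  have h2 : A ◁ ml n ≫ wl (β_ A A).hom
      = (coh A).inv ≫ (A ◁ n ≫ (β_ A A).hom) ▷ A ≫ (α_ _ _ _).hom := by
    generalize (β_ A A).hom = b
    simp [coh, ml, wl]
  rw [h2, h1]
  simp [coh, wl, Wg]

theorem N_ml (n : A ⊗ A ⟶ A) :
    (α_ A A (A ⊗ A)).inv ≫ n ▷ (A ⊗ A) ≫ ml n = (coh A).inv ≫ (ml n ≫ n) ▷ A := by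
  simp [coh, ml]

end generic

namespace RWMB
variable {A : C} {𝒴 : Set C} (S : RWMB A 𝒴)

theorem hm1' : S.t₁ ≫ jl S.j A = S.m := by rw [S.hm₁]; rfl

theorem hm2' : S.t₂ ≫ jr S.j A = S.m := by rw [S.hm₂]; rfl

theorem p_eq : S.piBarR2 = S.t₁ ≫ jr S.j A := rfl

theorem q_eq : S.piBarR1c = S.e₁ ≫ jr S.j A := rfl

theorem ndR {X Y : C} (hY : Y ∈ 𝒴) (h h' : X ⟶ Y ⊗ A)
    (H : h ▷ A ≫ (α_ Y A A).hom ≫ Y ◁ S.m = h' ▷ A ≫ (α_ Y A A).hom ≫ Y ◁ S.m) : h = h' := by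
  have := S.ndr X Y hY (a₁ := h ≫ (β_ A Y).inv) (a₂ := h' ≫ (β_ A Y).inv) (by
    dsimp only
    rw [aux_right, aux_right, reassoc_of% H])
  simpa using this

theorem ndN {X Y : C} (hY : Y ∈ 𝒴) (f f' : X ⟶ A ⊗ Y)
    (H : A ◁ f ≫ (α_ A A Y).inv ≫ ((β_ A A).inv ≫ S.m) ▷ Y
      = A ◁ f' ≫ (α_ A A Y).inv ≫ ((β_ A A).inv ≫ S.m) ▷ Y) : f = f' := by
  have e1 := aux_right' S.m (f ≫ (β_ Y A).inv)
  have e2 := aux_right' S.m (f' ≫ (β_ Y A).inv)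
  rw [assoc, Iso.inv_hom_id, comp_id] at e1 e2
  rw [e1, e2] at H
  have := S.ndR hY (f ≫ (β_ Y A).inv) (f' ≫ (β_ Y A).inv) (by
    rw [cancel_epi] at H
    simp only [← assoc] at H
    rw [cancel_mono] at H
    simpa using H)
  simpa using this

theorem ndL {X Y : C} (hY : Y ∈ 𝒴) (f f' : X ⟶ A ⊗ Y)
    (H : A ◁ f ≫ (α_ A A Y).inv ≫ S.m ▷ Y = A ◁ f' ≫ (α_ A A Y).inv ≫ S.m ▷ Y) : f = f' :=
  S.ndl X Y hY H

theorem ndLA {X : C} (f f' : X ⟶ A ⊗ A) (H : A ◁ f ≫ ml S.m = A ◁ f' ≫ ml S.m) : f = f' :=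
  S.ndL S.memA f f' H

theorem ndLI {X : C} (f f' : X ⟶ A) (H : A ◁ f ≫ S.m = A ◁ f' ≫ S.m) : f = f' := by
  have := S.ndL S.memI (f ≫ (ρ_ A).inv) (f' ≫ (ρ_ A).inv) (by
    have := congrArg (fun z => z ≫ (ρ_ A).inv) H
    simpa [← rightUnitor_inv_naturality] using this)
  simpa using this

theorem ndRI {X : C} (f f' : X ⟶ A) (H : f ▷ A ≫ S.m = f' ▷ A ≫ S.m) : f = f' := by
  have := S.ndR S.memI (f ≫ (λ_ A).inv) (f' ≫ (λ_ A).inv) (by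
    have := congrArg (fun z => z ≫ (λ_ A).inv) H
    simpa [← leftUnitor_inv_naturality] using this)
  simpa using this

theorem massoc : ml S.m ≫ S.m = A ◁ S.m ≫ S.m := by
  have h := congrArg (fun z => z ≫ jl S.j (A ⊗ A) ≫ jl S.j A) S.ax1
  have h8 := S.ax8
  change wl S.t₁ ≫ (A ◁ (β_ A A).hom) ≫ ml S.m ≫ jl S.j A
    = (A ◁ (β_ A A).hom) ≫ (A ◁ S.e₁) ≫ (A ◁ jl S.j A) ≫ S.m at h8
  simp only [assoc] at h
  have hw := wl_jl S.j S.t₁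
  rw [hm1'] at hw
  rw [reassoc_of% (jl_nat S.j S.t₁), hm1', reassoc_of% hw, reassoc_of% hw,
    ← reassoc_of% (aux_tw0 S.t₁), h8] at h
  rw [← h]
  simp only [← MonoidalCategory.whiskerLeft_comp_assoc, assoc, Iso.inv_hom_id_assoc]
  rw [reassoc_of% S.ax3, hm1']

theorem t1_lin : wl S.t₁ ≫ A ◁ S.m = A ◁ S.m ≫ S.t₁ := by
  apply S.ndLA
  have h := S.hc12
  have h1 := lin1 S.t₁ S.m S.m
  rw [h] at h1
  rw [← cancel_epi (coh A).hom, ← h1]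
  rw [MonoidalCategory.whiskerLeft_comp, assoc, h]
  have hx := exA S.t₂ S.m
  have ha := S.massoc
  have ha' := congrArg (fun z => A ◁ z) ha
  simp only [wl, ml, MonoidalCategory.whiskerLeft_comp, assoc] at hx ha' ⊢
  simp only [reassoc_of% hx, associator_naturality_right_assoc, ← ha']
  simp [coh]

theorem j_p : S.piBarR2 ≫ S.j = S.m ≫ S.j := by
  rw [p_eq, assoc, ← jl_jr, ← assoc, hm1']

theorem ax7' : A ◁ S.piBarR1c ≫ S.m
    = wl (β_ A A).hom ≫ A ◁ S.piBarR2 ≫ (β_ A A).inv ≫ S.m := by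
  have h := S.ax7
  change wl S.t₁ ≫ A ◁ jl S.j A ≫ S.m = (A ◁ (β_ A A).hom) ≫ (A ◁ S.e₁) ≫ A ◁ jr S.j A ≫ S.m at h
  rw [reassoc_of% wl_jm, ← p_eq] at h
  rw [← reassoc_of% (aux_tw2 S.piBarR2), h, q_eq]
  simp

theorem ax4' : A ◁ S.e₁ ≫ DD S.m S.t₁ = DD S.m S.t₁ := by
  rw [← dOne_eq_DD]; exact S.ax4

theorem e1m (j : A ⟶ 𝟙_ C) (hj : S.t₁ ≫ jl j A = S.m) :
    wl S.e₁ ≫ A ◁ S.m = A ◁ S.t₁ ≫ ml (S.e₁ ≫ jr j A) := by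
  rw [← wl_jm, reassoc_of% S.ax5, ← MonoidalCategory.whiskerLeft_comp, hj]

section withg
variable {g : A ⊗ A ⟶ A ⊗ A}

theorem g_lin (hg : (A ◁ S.m) ≫ g = (A ◁ S.t₁) ≫ ml S.piBarR2)
    (he : Epi (A ◁ S.m ▷ A)) : wl g ≫ A ◁ S.m = A ◁ S.m ≫ g := by
  rw [← cancel_epi (A ◁ S.m ▷ A), ← cancel_epi (α_ A (A ⊗ A) A).hom]
  have h1 := lin1 S.t₁ S.piBarR2 S.m
  rw [← hg, S.t1_lin, MonoidalCategory.whiskerLeft_comp, assoc, ← hg] at h1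
  have ha' := congrArg (fun z => A ◁ z) S.massoc
  simp only [ml, MonoidalCategory.whiskerLeft_comp, assoc] at ha'
  simp only [← reassoc_of% ha', coh] at h1
  simp [wl] at h1 ⊢
  exact h1

theorem K (hg : (A ◁ S.m) ≫ g = (A ◁ S.t₁) ≫ ml S.piBarR2)
    (he : Epi (A ◁ S.m ▷ A)) : A ◁ S.e₁ ≫ ml S.m = DD S.m g := by
  apply S.ndR S.memA
  rw [lin1, S.e1m S.j S.hm1', ← q_eq]
  unfold DD
  rw [comp_whiskerRight, assoc, lin1, S.g_lin hg he, hg]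
  simp only [MonoidalCategory.whiskerLeft_comp, assoc]
  rw [lin2, lin2, S.ax7', comp_whiskerRight, reassoc_of% lin3]

theorem g_jr (hg : (A ◁ S.m) ≫ g = (A ◁ S.t₁) ≫ ml S.piBarR2)
    (he : Epi (A ◁ S.m ▷ A)) : g ≫ jr S.j A = S.piBarR2 := by
  have k := congrArg (fun z => z ≫ jr S.j A) (S.K hg he)
  simp only [DD, assoc, ml_jr] at k
  rw [← MonoidalCategory.whiskerLeft_comp_assoc, ← q_eq, ax7', cancel_epi,
    ← MonoidalCategory.whiskerLeft_comp_assoc] at k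
  simp only [BraidedCategory.braiding_inv_naturality_right_assoc, cancel_epi] at k
  exact (S.ndRI _ _ k).symm

theorem g_jl (hg : (A ◁ S.m) ≫ g = (A ◁ S.t₁) ≫ ml S.piBarR2)
    (he : Epi (A ◁ S.m ▷ A)) : g ≫ jl S.j A = S.t₂ ≫ jl S.j A := by
  apply S.ndRI
  rw [← cancel_epi (α_ A A A).inv]
  have e : ∀ f : A ⊗ A ⟶ A ⊗ A,
      (α_ A A A).inv ≫ (f ≫ jl S.j A) ▷ A ≫ S.m = wl f ≫ A ◁ S.m ≫ jl S.j A := by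
    intro f
    rw [jl_nat, reassoc_of% wl_jl]
    simp [ml]
  rw [e, e, reassoc_of% (S.g_lin hg he), reassoc_of% hg, ml_jl S.j _ _ S.j_p, reassoc_of% S.hc12]

theorem e1_lin (hg : (A ◁ S.m) ≫ g = (A ◁ S.t₁) ≫ ml S.piBarR2)
    (he : Epi (A ◁ S.m ▷ A)) :
    ml ((β_ A A).inv ≫ S.m) ≫ S.e₁ = A ◁ S.e₁ ≫ ml ((β_ A A).inv ≫ S.m) := by
  apply S.ndLA
  have ha := S.massoc
  have k := S.K hg he
  have hL : A ◁ (A ◁ S.e₁ ≫ ml ((β_ A A).inv ≫ S.m)) ≫ ml S.m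
      = Wg (β_ A A).hom ≫ A ◁ (A ◁ S.e₁ ≫ ml S.m) ≫ ml ((β_ A A).inv ≫ S.m) := by
    simp only [MonoidalCategory.whiskerLeft_comp, assoc]
    rw [← reassoc_of% Wg_comm, lin2, lin2, asc2 _ ha, comp_whiskerRight, reassoc_of% Wg_coh]
  rw [hL, MonoidalCategory.whiskerLeft_comp, assoc, k]
  unfold DD
  rw [reassoc_of% br1, ← reassoc_of% (exA ((β_ A A).inv ≫ S.m) g), N_ml, nassoc _ ha]
  simp only [MonoidalCategory.whiskerLeft_comp, assoc]
  rw [lin2]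
  simp

theorem d1_e1 (hg : (A ◁ S.m) ≫ g = (A ◁ S.t₁) ≫ ml S.piBarR2)
    (he : Epi (A ◁ S.m ▷ A)) : DD S.m S.t₁ ≫ S.e₁ = DD S.m S.t₁ := by
  unfold DD
  simp only [assoc]
  rw [S.e1_lin hg he, ← MonoidalCategory.whiskerLeft_comp_assoc, S.ax3]

end withg
end RWMB

theorem RWMB.e1_iff_e2 {A : C} {𝒴 : Set C} (S S' : RWMB A 𝒴) (hm : S.m = S'.m) :
    S.e₁ = S'.e₁ ↔ S.e₂ = S'.e₂ := by
  have hS := S.hecomp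
  have hS' := S'.hecomp
  rw [← hm] at hS'
  have r1 : ∀ e : A ⊗ A ⟶ A ⊗ A, ((A ⊗ A) ◁ e) ≫ midSw A ≫ (S.m ▷ (A ⊗ A)) ≫ (A ◁ S.m)
      = (α_ A A (A ⊗ A)).hom ≫ A ◁ (A ◁ e ≫ wl (β_ A A).hom ≫ A ◁ S.m) ≫ ml S.m := by
    intro e
    have hx := exA S.m S.m
    simp only [ml, MonoidalCategory.whiskerLeft_comp, assoc, hx]
    simp [wl, midSw]
  have r2 : ∀ e : A ⊗ A ⟶ A ⊗ A, (e ▷ (A ⊗ A)) ≫ midSw A ≫ (S.m ▷ (A ⊗ A)) ≫ (A ◁ S.m)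
      = (α_ (A ⊗ A) A A).inv ≫
        (e ▷ A ≫ (α_ A A A).hom ≫ A ◁ (β_ A A).hom ≫ ml S.m) ▷ A ≫ (α_ A A A).hom ≫ A ◁ S.m := by
    intro e
    simp [ml, midSw]
  constructor
  · intro h
    rw [h, hS', r2, r2, cancel_epi] at hS
    have h1 := S.ndR S.memA _ _ hS
    rw [aux_e2] at h1
    have h2 : S.e₂ ≫ (β_ A A).inv = S'.e₂ ≫ (β_ A A).inv := by
      apply S.ndR S.memA
      rw [← cancel_mono (β_ A A).hom]
      simpa [wl] using h1.symm
    simpa using h2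
  · intro h
    rw [h, ← hS', r1, r1, cancel_epi] at hS
    have h1 := S.ndLA _ _ hS
    rw [aux_e1] at h1
    have h2 : S.e₁ ≫ (β_ A A).inv = S'.e₁ ≫ (β_ A A).inv := by
      apply S.ndLA
      rw [← cancel_mono (β_ A A).hom]
      simpa using h1
    simpa using h2

/-- uniqueness of the idempotents and the counit: for two regular weak
multiplier bimonoid structures on `A` sharing `t₁, t₂, t₃, t₄` and the (regular
epimorphic, non-degenerate) multiplication, the conditions `e₁ = e₁'`, `e₂ = e₂'`,
`g = g'` and `j = j'` are equivalent; and they hold if idempotents in `C` split and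
the morphisms `d̂₁` of both structures are epimorphisms. -/
theorem theorem_uniqueness_of_e_and_j
    (presL : ∀ X : C, PreservesColimitsOfShape WalkingParallelPair (tensorLeft X))
    (presR : ∀ X : C, PreservesColimitsOfShape WalkingParallelPair (tensorRight X))
    {A : C} {𝒴 : Set C} (S S' : RWMB A 𝒴)
    (ht₁ : S.t₁ = S'.t₁) (ht₂ : S.t₂ = S'.t₂)
    (ht₃ : S.t₃ = S'.t₃) (ht₄ : S.t₄ = S'.t₄)
    (hm : S.m = S'.m)
    (hmreg : Nonempty (RegularEpi S.m))
    -- the morphisms of Lemma 5.1 for the two structures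
    (g g' : A ⊗ A ⟶ A ⊗ A)
    (hg : (A ◁ S.m) ≫ g = (A ◁ S.t₁) ≫ ml S.piBarR2)
    (hg' : (A ◁ S'.m) ≫ g' = (A ◁ S'.t₁) ≫ ml S'.piBarR2) :
    -- (i) ↔ (ii) ↔ (iii) ↔ (iv)
    ((S.e₁ = S'.e₁ ↔ S.e₂ = S'.e₂) ∧
     (S.e₁ = S'.e₁ ↔ g = g') ∧
     (S.e₁ = S'.e₁ ↔ S.j = S'.j)) ∧
    -- the equivalent conditions hold if idempotents split and both `d̂₁` are epi
    (IsIdempotentComplete C →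
      ∀ (E₁ : C) (eHat₁ : A ⊗ A ⟶ E₁) (eCheck₁ : E₁ ⟶ A ⊗ A),
        eHat₁ ≫ eCheck₁ = S.e₁ → eCheck₁ ≫ eHat₁ = 𝟙 E₁ →
      ∀ (E₁' : C) (eHat₁' : A ⊗ A ⟶ E₁') (eCheck₁' : E₁' ⟶ A ⊗ A),
        eHat₁' ≫ eCheck₁' = S'.e₁ → eCheck₁' ≫ eHat₁' = 𝟙 E₁' →
        Epi (dOne S.m S.t₁ ≫ eHat₁) → Epi (dOne S'.m S'.t₁ ≫ eHat₁') →
        S.e₁ = S'.e₁) := by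
  have hepi : Epi S.m := hmreg.some.epi
  have := presL A
  have := presR A
  have hL : Epi (A ◁ S.m) := epi_map_of_reg (tensorLeft A) S.m hmreg.some

  have hLR : Epi (A ◁ S.m ▷ A) := epi_map_of_reg (tensorRight A ⋙ tensorLeft A) S.m hmreg.some
  have hLR' : Epi (A ◁ S'.m ▷ A) := by rw [← hm]; exact hLR
  have k := S.K hg hLR
  have k' := S'.K hg' hLR'
  rw [← hm] at k'
  have h13 : S.e₁ = S'.e₁ ↔ g = g' := by
    constructor
    · intro h
      rw [h, k'] at k
      unfold DD at k
      rw [cancel_epi] at k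
      exact (S.ndN S.memA _ _ k).symm
    · intro h
      apply S.ndLA
      rw [k, k', h]
  refine ⟨⟨S.e1_iff_e2 S' hm, h13, h13.trans ⟨fun h => ?_, fun h => ?_⟩⟩, ?_⟩
  · subst h
    rw [← cancel_epi S.m]
    have a1 : g ≫ jl S.j A ≫ S'.j = S.m ≫ S.j := by
      rw [reassoc_of% (S.g_jl hg hLR), jl_jr, ht₂, reassoc_of% S'.hm2', hm]
    rw [← a1, jl_jr, reassoc_of% (S'.g_jr hg' hLR'), RWMB.p_eq, assoc, ← jl_jr, ← ht₁,
      reassoc_of% S.hm1']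
  · rw [← cancel_epi (A ◁ S.m), hg, hm, hg', RWMB.p_eq, RWMB.p_eq, ht₁, h]
  · intro _ E₁ eHat₁ eCheck₁ h1 h2 E₁' eHat₁' eCheck₁' h1' h2' hE hE'
    rw [dOne_eq_DD] at hE
    have d := S.d1_e1 hg hLR
    have d' := S'.d1_e1 hg' hLR'
    rw [← hm, ← ht₁] at d'
    have c1 : eCheck₁ ≫ S'.e₁ = eCheck₁ := by
      rw [← cancel_epi (DD S.m S.t₁ ≫ eHat₁)]
      simp only [assoc]
      rw [reassoc_of% h1, h1, reassoc_of% d, d', d]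
    have c2 : S.e₁ ≫ S'.e₁ = S.e₁ := by rw [← h1, assoc, c1]
    have c3 : S.e₁ ≫ S'.piBarR1c = S'.piBarR1c := by
      apply S.ndLI
      have h7 := S'.ax7'
      have hD : wl (β_ A A).hom ≫ A ◁ S'.piBarR2 ≫ (β_ A A).inv ≫ S'.m
          = DD S'.m S'.t₁ ≫ jr S'.j A := by
        unfold DD
        simp only [assoc, ml_jr]
        rw [RWMB.p_eq, MonoidalCategory.whiskerLeft_comp, assoc]
      rw [hD, ← hm, ← ht₁] at h7
      rw [MonoidalCategory.whiskerLeft_comp, assoc, h7, reassoc_of% S.ax4']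
    have c4 : S.e₁ ≫ jr S'.j A = S'.e₁ ≫ jr S'.j A := by
      rw [RWMB.q_eq, reassoc_of% c2] at c3
      exact c3
    have hj : S.t₁ ≫ jl S'.j A = S.m := by rw [ht₁, S'.hm1', hm]
    have z := S.e1m S'.j hj
    have z' := S'.e1m S'.j S'.hm1'
    rw [← hm, ← ht₁, ← c4, ← z] at z'
    apply S.ndR S.memA
    unfold wl at z'
    simpa using z'.symm

end WeakMultiplierBimonoid
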